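/- Let F_1, F_2, … be a uniformly attracting sequence of correctly ordered automorphisms of ℂ², and write F_n(x, y) = (λ_n x, μ_n y + a_n x) + (terms of order ≥ 2), so that F_n′(0) is lower triangular with diagonal entries λ_n, μ_n. Then there exist a bounded sequence of complex numbers d_1, d_2, …, a constant C > 0, and a sequence X_0, X_1, … of polynomial maps of ℂ² of the form X_n = identity + (homogeneous quadratic terms) with all coefficients uniformly bounded, such that, setting G_n(x, y) = (λ_n x, μ_n y + a_n x + d_n x²), one has ‖G_n(X_{n−1}(z)) − X_n(F_n(z))‖ ≤ C‖z‖³ for every n ≥ 1 and every z in the open unit ball of ℂ². -/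

import Mathlib

open Metric Filter Topology

noncomputable section

/-- `ℂ^k` with the Euclidean norm. -/
abbrev Ck (k : ℕ) := EuclideanSpace ℂ (Fin k)

/-- Build a point of `ℂ²` from its two coordinates. -/
def mk2 (x y : ℂ) : Ck 2 := (WithLp.equiv 2 (∀ _ : Fin 2, ℂ)).symm ![x, y]

/-- An automorphism of `ℂ²`: a bijective holomorphic map with holomorphic inverse. -/
def IsAutomorphism (F : Ck 2 → Ck 2) : Prop :=
  Differentiable ℂ F ∧ ∃ Finv : Ck 2 → Ck 2, Differentiable ℂ Finv ∧
    Function.LeftInverse Finv F ∧ Function.RightInverse Finv F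

/-- The matrix of the derivative of `F` at `0` in the standard basis. -/
def derivMatrix (F : Ck 2 → Ck 2) : Matrix (Fin 2) (Fin 2) ℂ :=
  fun i j => fderiv ℂ F 0 (EuclideanSpace.single j 1) i

/-- `F` is in lower triangular form: `F'(0)` is lower triangular. -/
def LowerTriAtZero (F : Ck 2 → Ck 2) : Prop :=
  ∀ i j : Fin 2, i < j → derivMatrix F i j = 0

/-- `F` is correctly ordered: `F'(0)` is lower triangular with diagonal entries
`λ_1, …, λ_k` satisfying `|λ_j||λ_i| < |λ_l|` whenever `l ≤ j`, for every `i`. -/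
def CorrectlyOrdered (F : Ck 2 → Ck 2) : Prop :=
  LowerTriAtZero F ∧
    ∀ l j i : Fin 2, l ≤ j →
      ‖derivMatrix F j j‖ * ‖derivMatrix F i i‖ < ‖derivMatrix F l l‖

/-- A sequence of correctly ordered automorphisms is uniformly attracting. -/
def UniformlyAttracting (F : ℕ → Ck 2 → Ck 2) : Prop :=
  ∃ a b : ℝ, 0 < a ∧ a < b ∧ b < 1 ∧
    (∀ n, ∀ z ∈ ball (0 : Ck 2) 1, a * ‖z‖ ≤ ‖F n z‖ ∧ ‖F n z‖ ≤ b * ‖z‖) ∧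
    ∃ ξ : ℝ, ξ < 1 ∧ ∀ n, ∀ l j i : Fin 2, l ≤ j →
      ‖derivMatrix (F n) i i‖ * ‖derivMatrix (F n) j j‖ ≤ ξ * ‖derivMatrix (F n) l l‖

/-- The quadratic map `X(x,y) = (x + α y² + β xy + γ x², y + δ y² + ε xy + ζ x²)`. -/
def quadMap (al be ga de ep ze : ℂ) (z : Ck 2) : Ck 2 :=
  mk2 (z 0 + al * (z 1) ^ 2 + be * (z 0 * z 1) + ga * (z 0) ^ 2)
      (z 1 + de * (z 1) ^ 2 + ep * (z 0 * z 1) + ze * (z 0) ^ 2)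

/-- The lower triangular map `G(x,y) = (λ x, μ y + a x + d x²)`. -/
def lowerG (lam mu a d : ℂ) (z : Ck 2) : Ck 2 :=
  mk2 (lam * z 0) (mu * z 1 + a * z 0 + d * (z 0) ^ 2)

/-- separately entire and bounded on bounded sets -/
def SepHol {V : Type*} [NormedAddCommGroup V] [NormedSpace ℂ V] (f : ℂ → ℂ → V) : Prop :=
  (∀ x, Differentiable ℂ (f x)) ∧ (∀ y, Differentiable ℂ (fun x => f x y)) ∧
    ∀ R : ℝ, ∃ M : ℝ, ∀ x y, ‖x‖ < R → ‖y‖ < R → ‖f x y‖ ≤ M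

theorem lip_aux {V : Type*} [NormedAddCommGroup V] [NormedSpace ℂ V] {g : ℂ → V} {R M : ℝ}
    (hg : Differentiable ℂ g) (hM : ∀ y, ‖y‖ < R → ‖g y‖ ≤ M) {y : ℂ} (hy : ‖y‖ < R) :
    ‖g y - g 0‖ ≤ 2 * M / R * ‖y‖ := by
  have hR : 0 < R := (norm_nonneg y).trans_lt hy
  have := Complex.dist_le_div_mul_dist_of_mapsTo_ball (f := g) (c := 0) (R₁ := R) (R₂ := 2 * M)
    (z := y) hg.differentiableOn (by
      intro w hw
      have h1 := hM w (by simpa using hw)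
      have h2 := hM 0 (by simpa using hR)
      rw [mem_closedBall, dist_eq_norm]
      linarith [norm_sub_le (g w) (g 0)]) (by simpa using hy)
  simpa [dist_eq_norm] using this

theorem dslope_differentiable {V : Type*} [NormedAddCommGroup V] [NormedSpace ℂ V]
    [CompleteSpace V] {g : ℂ → V} (hg : Differentiable ℂ g) : Differentiable ℂ (dslope g 0) := by
  rw [← differentiableOn_univ]
  exact (Complex.differentiableOn_dslope univ_mem).2 hg.differentiableOn

theorem sepHol_dslope {V : Type*} [NormedAddCommGroup V] [NormedSpace ℂ V] [CompleteSpace V]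
    {f : ℂ → ℂ → V} (hf : SepHol f) : SepHol (fun x y => dslope (f x) 0 y) := by
  obtain ⟨h1, h2, h3⟩ := hf
  have hb : ∀ R : ℝ, ∃ M : ℝ, ∀ x y : ℂ, ‖x‖ < R → ‖y‖ < R → ‖dslope (f x) 0 y‖ ≤ M := by
    intro R
    obtain ⟨M, hM⟩ := h3 R
    refine ⟨2 * M / R, fun x y hx hy => ?_⟩
    refine Complex.norm_dslope_le_div_of_mapsTo_ball (h1 x).differentiableOn ?_ (by simpa using hy)
    intro w hw
    have e1 := hM x w hx (by simpa using hw)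
    have e2 := hM x 0 hx (by simpa using (norm_nonneg y).trans_lt hy)
    rw [mem_closedBall, dist_eq_norm]
    linarith [norm_sub_le (f x w) (f x 0)]
  have hne : ∀ y : ℂ, y ≠ 0 → Differentiable ℂ (fun x => dslope (f x) 0 y) := by
    intro y hy
    simp only [dslope_of_ne _ hy, slope_def_module]
    exact ((h2 y).sub (h2 0)).const_smul _
  refine ⟨fun x => dslope_differentiable (h1 x), fun y => ?_, hb⟩
  by_cases hy : y = 0
  swap
  · exact hne y hy
  subst hy
  rw [← differentiableOn_univ]
  have hlim : TendstoLocallyUniformlyOn (fun (h : ℂ) (x : ℂ) => dslope (f x) 0 h)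
      (fun x => dslope (f x) 0 0) (𝓝[≠] (0 : ℂ)) Set.univ := by
    rw [Metric.tendstoLocallyUniformlyOn_iff]
    intro ε hε x _
    obtain ⟨M, hM⟩ := hb (‖x‖ + 1)
    refine ⟨ball 0 (‖x‖ + 1), mem_nhdsWithin_of_mem_nhds (isOpen_ball.mem_nhds (by simp)), ?_⟩
    have ht : Tendsto (fun h : ℂ => 2 * M / (‖x‖ + 1) * ‖h‖) (𝓝[≠] (0 : ℂ)) (𝓝 0) := by
      have : Continuous (fun h : ℂ => 2 * M / (‖x‖ + 1) * ‖h‖) := by fun_prop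
      simpa using (this.tendsto 0).mono_left nhdsWithin_le_nhds
    have hs : ∀ᶠ h : ℂ in 𝓝[≠] (0 : ℂ), ‖h‖ < ‖x‖ + 1 := by
      have : ball (0 : ℂ) (‖x‖ + 1) ∈ 𝓝[≠] (0 : ℂ) :=
        mem_nhdsWithin_of_mem_nhds (ball_mem_nhds _ (by positivity))
      filter_upwards [this] with h hh
      simpa using hh
    filter_upwards [ht.eventually_lt_const hε, hs] with h h5 h6 w hw
    rw [dist_comm, dist_eq_norm]
    exact (lip_aux (dslope_differentiable (h1 w)) (fun y hy => hM w y (by simpa using hw) hy)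
      h6).trans_lt h5
  refine hlim.differentiableOn ?_ isOpen_univ
  filter_upwards [self_mem_nhdsWithin] with h hh
  exact (hne h hh).differentiableOn

theorem dslope_eq {V : Type*} [NormedAddCommGroup V] [NormedSpace ℂ V] (g : ℂ → V) (y : ℂ) :
    g y = g 0 + y • dslope g 0 y := by
  have := sub_smul_dslope g 0 y
  rw [sub_zero] at this
  rw [this]; abel

theorem sepHol_lip {V : Type*} [NormedAddCommGroup V] [NormedSpace ℂ V]
    {f : ℂ → ℂ → V} (hf : SepHol f) :
    ∃ C : ℝ, 0 ≤ C ∧ ∀ x y : ℂ, ‖x‖ < 1 → ‖y‖ < 1 → ‖f x y - f 0 0‖ ≤ C * (‖x‖ + ‖y‖) := by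
  obtain ⟨h1, h2, h3⟩ := hf
  obtain ⟨M, hM⟩ := h3 1
  have hM0 : 0 ≤ M := (norm_nonneg _).trans (hM 0 0 (by simp) (by simp))
  refine ⟨2 * M, by positivity, fun x y hx hy => ?_⟩
  have e1 := lip_aux (h1 x) (fun y hy => hM x y hx hy) hy
  have e2 := lip_aux (h2 0) (fun x hx => hM x 0 hx (by simp)) hx
  simp only [div_one] at e1 e2
  calc ‖f x y - f 0 0‖ = ‖(f x y - f x 0) + (f x 0 - f 0 0)‖ := by congr 1; abel
    _ ≤ _ := norm_add_le _ _
    _ ≤ _ := by linarith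

theorem sepHol_taylor {V : Type*} [NormedAddCommGroup V] [NormedSpace ℂ V] [CompleteSpace V]
    {f : ℂ → ℂ → V} (hf : SepHol f) :
    ∃ (A B D : V) (C : ℝ), ∀ x y : ℂ, ‖x‖ < 1 → ‖y‖ < 1 →
      ‖f x y - f 0 0 - x • deriv (fun x => f x 0) 0 - y • deriv (f 0) 0
        - (x ^ 2 • A + (x * y) • B + y ^ 2 • D)‖ ≤ C * (‖x‖ + ‖y‖) ^ 3 := by
  have hg := sepHol_dslope hf
  have hk := sepHol_dslope hg
  set g : ℂ → ℂ → V := fun x y => dslope (f x) 0 y with hgdef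
  set k : ℂ → ℂ → V := fun x y => dslope (g x) 0 y with hkdef
  have hc : ∀ {φ : ℂ → V}, Differentiable ℂ φ → SepHol (fun x _ => φ x) := by
    intro φ hφ
    refine ⟨fun x => differentiable_const _, fun y => hφ, fun R => ?_⟩
    obtain ⟨M, hM⟩ := (isCompact_closedBall (0 : ℂ) R).exists_bound_of_continuousOn
      hφ.continuous.continuousOn
    exact ⟨M, fun x y hx _ => hM x (by simpa using hx.le)⟩
  have hφ1 := dslope_differentiable (hf.2.1 0)
  have hφ2 := dslope_differentiable hφ1
  have hγ := dslope_differentiable (hg.2.1 0)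
  set φ1 := dslope (fun x => f x 0) 0 with hφ1def
  set φ2 := dslope φ1 0 with hφ2def
  set γ := dslope (fun x => g x 0) 0 with hγdef
  obtain ⟨C1, hC1, b1⟩ := sepHol_lip (hc hφ2)
  obtain ⟨C2, hC2, b2⟩ := sepHol_lip (hc hγ)
  obtain ⟨C3, hC3, b3⟩ := sepHol_lip hk
  refine ⟨φ2 0, γ 0, k 0 0, C1 + C2 + C3, fun x y hx hy => ?_⟩
  have e1 : f x y = f x 0 + y • g x y := dslope_eq (f x) y
  have e2 : g x y = g x 0 + y • k x y := dslope_eq (g x) y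
  have e3 : f x 0 = f 0 0 + x • φ1 x := dslope_eq (fun x => f x 0) x
  have e4 : φ1 x = φ1 0 + x • φ2 x := dslope_eq φ1 x
  have e5 : g x 0 = g 0 0 + x • γ x := dslope_eq (fun x => g x 0) x
  have e6 : φ1 0 = deriv (fun x => f x 0) 0 := dslope_same _ _
  have e7 : g 0 0 = deriv (f 0) 0 := dslope_same _ _
  have key : f x y - f 0 0 - x • deriv (fun x => f x 0) 0 - y • deriv (f 0) 0
        - (x ^ 2 • φ2 0 + (x * y) • γ 0 + y ^ 2 • k 0 0)
      = x ^ 2 • (φ2 x - φ2 0) + (x * y) • (γ x - γ 0) + y ^ 2 • (k x y - k 0 0) := by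
    rw [e1, e2, e3, e4, e5, ← e6, ← e7]
    module
  rw [key]
  have n1 : ‖x ^ 2 • (φ2 x - φ2 0)‖ ≤ (‖x‖ + ‖y‖) ^ 2 * (C1 * (‖x‖ + ‖y‖)) := by
    rw [norm_smul, norm_pow]
    gcongr
    · linarith [norm_nonneg y]
    · exact b1 x y hx hy
  have n2 : ‖(x * y) • (γ x - γ 0)‖ ≤ (‖x‖ + ‖y‖) ^ 2 * (C2 * (‖x‖ + ‖y‖)) := by
    rw [norm_smul, norm_mul]
    gcongr
    · nlinarith [norm_nonneg y, norm_nonneg x]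
    · exact b2 x y hx hy
  have n3 : ‖y ^ 2 • (k x y - k 0 0)‖ ≤ (‖x‖ + ‖y‖) ^ 2 * (C3 * (‖x‖ + ‖y‖)) := by
    rw [norm_smul, norm_pow]
    gcongr
    · linarith [norm_nonneg x]
    · exact b3 x y hx hy
  calc _ ≤ _ := norm_add₃_le
    _ ≤ _ := add_le_add (add_le_add n1 n2) n3
    _ = _ := by ring

theorem bounded_rec (k c : ℕ → ℂ) (ξ K : ℝ) (h1 : ξ < 1) (hk : ∀ n, ‖k n‖ ≤ ξ)
    (hc : ∀ n, ‖c n‖ ≤ K) :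
    ∃ (u : ℕ → ℂ) (M : ℝ), (∀ n, ‖u n‖ ≤ M) ∧ ∀ n, u n = c n + k n * u (n + 1) := by
  have h0 : 0 ≤ ξ := (norm_nonneg _).trans (hk 0)
  have hb : ∀ n j, ‖(∏ i ∈ Finset.range j, k (n + i)) * c (n + j)‖ ≤ ξ ^ j * K := by
    intro n j
    rw [norm_mul, norm_prod]
    gcongr
    · calc _ ≤ ∏ i ∈ Finset.range j, ξ := Finset.prod_le_prod (fun _ _ => norm_nonneg _)
            (fun i _ => hk _)
        _ = _ := by simp
    · exact hc _
  have hg : Summable (fun j : ℕ => ξ ^ j * K) := (summable_geometric_of_lt_one h0 h1).mul_right K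
  have hs : ∀ n, Summable (fun j => (∏ i ∈ Finset.range j, k (n + i)) * c (n + j)) :=
    fun n => Summable.of_norm_bounded hg (hb n)
  refine ⟨fun n => ∑' j, (∏ i ∈ Finset.range j, k (n + i)) * c (n + j), ∑' j, ξ ^ j * K,
    fun n => tsum_of_norm_bounded hg.hasSum (hb n), fun n => ?_⟩
  simp only
  rw [(hs n).tsum_eq_zero_add, ← tsum_mul_left]
  simp only [Finset.range_zero, Finset.prod_empty, add_zero, one_mul]
  congr 1
  refine tsum_congr fun j => ?_
  rw [Finset.prod_range_succ', add_zero]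
  have e : ∏ i ∈ Finset.range j, k (n + (i + 1)) = ∏ i ∈ Finset.range j, k (n + 1 + i) :=
    Finset.prod_congr rfl fun i _ => by rw [add_assoc n 1 i, add_comm 1 i]
  have e2 : n + (j + 1) = n + 1 + j := by omega
  rw [e, e2]
  ring

theorem mk2_0 (x y : ℂ) : mk2 x y 0 = x := rfl

theorem mk2_1 (x y : ℂ) : mk2 x y 1 = y := rfl

theorem mk2_eta (z : Ck 2) : mk2 (z 0) (z 1) = z := by
  ext i; fin_cases i <;> rfl

theorem norm_le_coords (z : Ck 2) : ‖z‖ ≤ ‖z 0‖ + ‖z 1‖ := by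
  rw [EuclideanSpace.norm_eq, Fin.sum_univ_two]
  refine Real.sqrt_le_iff.2 ⟨by positivity, ?_⟩
  nlinarith [norm_nonneg (z 0), norm_nonneg (z 1)]

theorem coord_le (z : Ck 2) (i : Fin 2) : ‖z i‖ ≤ ‖z‖ := PiLp.norm_apply_le z i

theorem mk2_lin (x y : ℂ) :
    mk2 x y = x • EuclideanSpace.single 0 1 + y • EuclideanSpace.single 1 1 := by
  ext i; fin_cases i <;> simp [mk2]

theorem sepHol_of_differentiable {f : Ck 2 → Ck 2} (hf : Differentiable ℂ f) :
    SepHol (fun x y => f (mk2 x y)) := by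
  simp only [mk2_lin]
  refine ⟨fun x => by fun_prop, fun y => by fun_prop, fun R => ?_⟩
  obtain ⟨M, hM⟩ := (isCompact_closedBall (0 : Ck 2) (2 * R)).exists_bound_of_continuousOn
      hf.continuous.continuousOn
  refine ⟨M, fun x y hx hy => hM _ ?_⟩
  rw [← mk2_lin, mem_closedBall, dist_zero_right]
  have := norm_le_coords (mk2 x y)
  rw [mk2_0, mk2_1] at this
  linarith

/-- quadratic form -/
def QQ (A B D : Ck 2) (z : Ck 2) : Ck 2 := (z 0) ^ 2 • A + (z 0 * z 1) • B + (z 1) ^ 2 • D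

theorem QQ_smul (A B D : Ck 2) (t : ℂ) (z : Ck 2) : QQ A B D (t • z) = t ^ 2 • QQ A B D z := by
  simp only [QQ, PiLp.smul_apply, smul_eq_mul]
  module

theorem taylor_F {f : Ck 2 → Ck 2} (hf : Differentiable ℂ f) (h0 : f 0 = 0)
    (hb : ∀ z ∈ ball (0 : Ck 2) 1, ‖f z‖ ≤ 1) :
    ∃ A B D : Ck 2, ‖A‖ ≤ 2 ∧ ‖B‖ ≤ 12 ∧ ‖D‖ ≤ 2 ∧ ∀ z ∈ ball (0 : Ck 2) 1,
      ‖f z - fderiv ℂ f 0 z - QQ A B D z‖ ≤ 4 * ‖z‖ ^ 3 := by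
  have hL : ‖fderiv ℂ f 0‖ ≤ 1 := by
    refine Complex.norm_fderiv_le_one_of_mapsTo_ball (R := 1) hf.differentiableOn ?_ one_pos
    intro z hz
    simpa [h0] using hb z hz
  set L := fderiv ℂ f 0 with hLdef
  have hLz : ∀ z, ‖L z‖ ≤ ‖z‖ := fun z => (L.le_of_opNorm_le hL z).trans (by simp)
  obtain ⟨A, B, D, C, hT⟩ := sepHol_taylor (sepHol_of_differentiable hf)
  have hd1 : deriv (fun x => f (mk2 x 0)) 0 = L (EuclideanSpace.single 0 1) := by
    have h1 : HasDerivAt (fun x : ℂ => mk2 x 0) (EuclideanSpace.single 0 1) 0 := by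
      simp only [mk2_lin]
      simpa using ((hasDerivAt_id (0 : ℂ)).smul_const (EuclideanSpace.single (0 : Fin 2) (1 : ℂ)))
    have e : mk2 0 0 = 0 := by simp [mk2_lin]
    have h2 : HasFDerivAt f L (mk2 0 0) := by rw [e]; exact (hf 0).hasFDerivAt
    exact (HasFDerivAt.comp_hasDerivAt (f := fun x => mk2 x 0) (0 : ℂ) h2 h1).deriv
  have hd2 : deriv (fun y => f (mk2 0 y)) 0 = L (EuclideanSpace.single 1 1) := by
    have h1 : HasDerivAt (fun y : ℂ => mk2 0 y) (EuclideanSpace.single 1 1) 0 := by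
      simp only [mk2_lin]
      simpa using ((hasDerivAt_id (0 : ℂ)).smul_const (EuclideanSpace.single (1 : Fin 2) (1 : ℂ)))
    have e : mk2 0 0 = 0 := by simp [mk2_lin]
    have h2 : HasFDerivAt f L (mk2 0 0) := by rw [e]; exact (hf 0).hasFDerivAt
    exact (h2.comp_hasDerivAt (0 : ℂ) h1).deriv
  have hC : 0 ≤ C := by
    have := (norm_nonneg _).trans (hT (1/2) 0 (by norm_num) (by norm_num))
    norm_num at this
    linarith
  have hloc : ∀ z ∈ ball (0 : Ck 2) 1, ‖f z - L z - QQ A B D z‖ ≤ 8 * C * ‖z‖ ^ 3 := by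
    intro z hz
    rw [mem_ball, dist_zero_right] at hz
    have h := hT (z 0) (z 1) ((coord_le z 0).trans_lt hz) ((coord_le z 1).trans_lt hz)
    have e : mk2 0 0 = 0 := by simp [mk2_lin]
    have e2 : L z = z 0 • L (EuclideanSpace.single 0 1) + z 1 • L (EuclideanSpace.single 1 1) := by
      conv_lhs => rw [← mk2_eta z, mk2_lin]
      rw [map_add, map_smul, map_smul]
    rw [hd1, hd2, mk2_eta, e, h0, sub_zero] at h
    have e3 : f z - L z - QQ A B D z = f z - z 0 • L (EuclideanSpace.single 0 1)
        - z 1 • L (EuclideanSpace.single 1 1)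
        - ((z 0) ^ 2 • A + (z 0 * z 1) • B + (z 1) ^ 2 • D) := by
      rw [e2, QQ]; abel
    rw [e3]
    refine h.trans ?_
    calc C * (‖z 0‖ + ‖z 1‖) ^ 3 ≤ C * (‖z‖ + ‖z‖) ^ 3 := by
          gcongr <;> exact coord_le _ _
      _ = _ := by ring
  have hq1 : ∀ z ∈ ball (0 : Ck 2) 1, ‖f z - L z‖ ≤ 2 * ‖z‖ ^ 2 := by
    intro z hz
    have := Complex.dist_le_mul_div_pow_of_mapsTo_ball_of_isLittleO (f := fun z => f z - L z)
      (c := 0) (z := z) (R₁ := 1) (R₂ := 2) (n := 1)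
      (hf.sub L.differentiable).differentiableOn (by
        intro w hw
        have := hb w hw
        rw [mem_ball, dist_zero_right] at hw
        simp only [h0, map_zero, sub_zero, mem_closedBall, dist_zero_right]
        linarith [norm_sub_le (f w) (L w), hLz w]) (by
        have h := (hf 0).hasFDerivAt.isLittleO
        simp only [h0, map_zero, sub_zero, pow_one] at h ⊢
        exact h.norm_right) hz
    simpa [h0] using this
  have hQ : ∀ z, ‖QQ A B D z‖ ≤ 2 * ‖z‖ ^ 2 := by
    intro z
    have hev : ∀ᶠ t : ℝ in 𝓝[>] 0, ‖QQ A B D z‖ ≤ 2 * ‖z‖ ^ 2 + t * (8 * C * ‖z‖ ^ 3) := by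
      have hs : ∀ᶠ t : ℝ in 𝓝[>] 0, t * ‖z‖ < 1 := by
        have : Tendsto (fun t : ℝ => t * ‖z‖) (𝓝[>] 0) (𝓝 0) := by
          have h : Continuous (fun t : ℝ => t * ‖z‖) := by fun_prop
          simpa using (h.tendsto 0).mono_left nhdsWithin_le_nhds
        exact this.eventually_lt_const one_pos
      filter_upwards [hs, self_mem_nhdsWithin] with t ht htp
      have htp : 0 < t := htp
      have hn : ‖(t : ℂ) • z‖ = t * ‖z‖ := by
        rw [norm_smul, Complex.norm_real, Real.norm_of_nonneg htp.le]
      have hm : (t : ℂ) • z ∈ ball (0 : Ck 2) 1 := by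
        rw [mem_ball, dist_zero_right, hn]; exact ht
      have a1 := hloc _ hm
      have a2 := hq1 _ hm
      have a3 : ‖QQ A B D ((t : ℂ) • z)‖ = t ^ 2 * ‖QQ A B D z‖ := by
        rw [QQ_smul, norm_smul, norm_pow, Complex.norm_real, Real.norm_of_nonneg htp.le]
      have a4 : ‖QQ A B D ((t : ℂ) • z)‖ ≤ 2 * (t * ‖z‖) ^ 2 + 8 * C * (t * ‖z‖) ^ 3 := by
        rw [hn] at a1 a2
        have := norm_sub_le (f ((t : ℂ) • z) - L ((t : ℂ) • z))
          (f ((t : ℂ) • z) - L ((t : ℂ) • z) - QQ A B D ((t : ℂ) • z))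
        rw [sub_sub_cancel] at this
        linarith
      rw [a3] at a4
      have : t ^ 2 * ‖QQ A B D z‖ ≤ t ^ 2 * (2 * ‖z‖ ^ 2 + t * (8 * C * ‖z‖ ^ 3)) := by
        calc _ ≤ _ := a4
          _ = _ := by ring
      exact le_of_mul_le_mul_left this (by positivity)
    have hl : Tendsto (fun t : ℝ => 2 * ‖z‖ ^ 2 + t * (8 * C * ‖z‖ ^ 3)) (𝓝[>] 0)
        (𝓝 (2 * ‖z‖ ^ 2)) := by
      have h : Continuous (fun t : ℝ => 2 * ‖z‖ ^ 2 + t * (8 * C * ‖z‖ ^ 3)) := by fun_prop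
      simpa using (h.tendsto 0).mono_left nhdsWithin_le_nhds
    exact ge_of_tendsto hl hev
  have hA : ‖A‖ ≤ 2 := by
    have := hQ (mk2 1 0)
    have e : ‖mk2 1 0‖ = 1 := by simp [mk2_lin]
    rw [e] at this
    simpa [QQ, mk2_0, mk2_1] using this
  have hD : ‖D‖ ≤ 2 := by
    have := hQ (mk2 0 1)
    have e : ‖mk2 0 1‖ = 1 := by simp [mk2_lin]
    rw [e] at this
    simpa [QQ, mk2_0, mk2_1] using this
  have hB : ‖B‖ ≤ 12 := by
    have h1 := hQ (mk2 1 1)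
    have e : ‖mk2 1 1‖ ≤ 2 := by
      have := norm_le_coords (mk2 1 1)
      simp only [mk2_0, mk2_1, norm_one] at this
      linarith
    have e2 : QQ A B D (mk2 1 1) = A + B + D := by simp [QQ, mk2_0, mk2_1]
    rw [e2] at h1
    have h2 : ‖A + B + D‖ ≤ 8 := h1.trans (by nlinarith [norm_nonneg (mk2 1 1)])
    have h3 : B = (A + B + D) - A - D := by abel
    rw [h3]
    linarith [norm_sub_le ((A + B + D) - A) D, norm_sub_le (A + B + D) A]
  refine ⟨A, B, D, hA, hB, hD, fun z hz => ?_⟩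
  have hQd : Differentiable ℂ (QQ A B D) := by
    unfold QQ
    fun_prop
  have hQ0 : QQ A B D 0 = 0 := by simp [QQ]
  have := Complex.dist_le_mul_div_pow_of_mapsTo_ball_of_isLittleO
      (f := fun z => f z - L z - QQ A B D z)
      (c := 0) (z := z) (R₁ := 1) (R₂ := 4) (n := 2)
      ((hf.sub L.differentiable).sub hQd).differentiableOn (by
        intro w hw
        have h1 := hb w hw
        have h2 := hQ w
        rw [mem_ball, dist_zero_right] at hw
        simp only [h0, hQ0, map_zero, sub_zero, mem_closedBall, dist_zero_right]
        have h3 : ‖w‖ ^ 2 ≤ 1 := by nlinarith [norm_nonneg w]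
        linarith [norm_sub_le (f w - L w) (QQ A B D w), norm_sub_le (f w) (L w), hLz w]) (by
        simp only [h0, hQ0, map_zero, sub_zero]
        have hO : (fun z => f z - L z - QQ A B D z) =O[𝓝 0] (fun z : Ck 2 => ‖z‖ ^ 3) := by
          refine Asymptotics.IsBigO.of_bound (8 * C) ?_
          filter_upwards [ball_mem_nhds (0 : Ck 2) one_pos] with w hw
          simpa using hloc w hw
        refine hO.trans_isLittleO ?_
        have := (Asymptotics.isLittleO_pow_pow (𝕜 := ℝ) (m := 2) (n := 3) (by norm_num)).comp_tendsto
          (continuous_norm.tendsto' (0 : Ck 2) 0 norm_zero)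
        exact this) hz
  simpa [h0, hQ0] using this

/-- bounded sequence -/
def Bd (u : ℕ → ℂ) : Prop := ∃ M : ℝ, ∀ n, ‖u n‖ ≤ M

theorem Bd.mul {u v : ℕ → ℂ} (hu : Bd u) (hv : Bd v) : Bd (fun n => u n * v n) := by
  obtain ⟨M, hM⟩ := hu
  obtain ⟨N, hN⟩ := hv
  refine ⟨M * N, fun n => ?_⟩
  have := (norm_nonneg _).trans (hM n)
  rw [norm_mul]
  gcongr
  · exact hM n
  · exact hN n

theorem Bd.add {u v : ℕ → ℂ} (hu : Bd u) (hv : Bd v) : Bd (fun n => u n + v n) := by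
  obtain ⟨M, hM⟩ := hu
  obtain ⟨N, hN⟩ := hv
  exact ⟨M + N, fun n => (norm_add_le _ _).trans (add_le_add (hM n) (hN n))⟩

theorem Bd.sub {u v : ℕ → ℂ} (hu : Bd u) (hv : Bd v) : Bd (fun n => u n - v n) := by
  obtain ⟨M, hM⟩ := hu
  obtain ⟨N, hN⟩ := hv
  exact ⟨M + N, fun n => (norm_sub_le _ _).trans (add_le_add (hM n) (hN n))⟩

theorem Bd.shift {u : ℕ → ℂ} (hu : Bd u) : Bd (fun n => u (n + 1)) := by
  obtain ⟨M, hM⟩ := hu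
  exact ⟨M, fun n => hM _⟩

theorem Bd.two {u : ℕ → ℂ} (hu : Bd u) : Bd (fun n => 2 * u n) := by
  obtain ⟨M, hM⟩ := hu
  refine ⟨2 * M, fun n => ?_⟩
  rw [norm_mul]
  simpa using hM n

theorem bd_rec {k c : ℕ → ℂ} {ξ : ℝ} (h1 : ξ < 1) (hk : ∀ n, ‖k n‖ ≤ ξ) (hc : Bd c) :
    ∃ u : ℕ → ℂ, Bd u ∧ ∀ n, u n = c n + k n * u (n + 1) := by
  obtain ⟨K, hK⟩ := hc
  obtain ⟨u, M, h, h'⟩ := bounded_rec k c ξ K h1 hk hK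
  exact ⟨u, ⟨M, h⟩, h'⟩

theorem prod_diff {f f' l l' : ℂ} {t K : ℝ} (hf : ‖f‖ ≤ t) (hl : ‖l'‖ ≤ t)
    (h : ‖f - l‖ ≤ K * t ^ 2) (h' : ‖f' - l'‖ ≤ K * t ^ 2) :
    ‖f * f' - l * l'‖ ≤ 2 * K * t ^ 3 := by
  have e : f * f' - l * l' = f * (f' - l') + (f - l) * l' := by ring
  have ht : 0 ≤ t := (norm_nonneg _).trans hf
  have hK : 0 ≤ K * t ^ 2 := (norm_nonneg _).trans h
  rw [e]
  calc _ ≤ _ := norm_add_le _ _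
    _ = ‖f‖ * ‖f' - l'‖ + ‖f - l‖ * ‖l'‖ := by rw [norm_mul, norm_mul]
    _ ≤ t * (K * t ^ 2) + (K * t ^ 2) * t := by gcongr
    _ = _ := by ring

theorem quad_bound {A B D x y : ℂ} {a b d t : ℝ} (hA : ‖A‖ ≤ a) (hB : ‖B‖ ≤ b) (hD : ‖D‖ ≤ d)
    (hx : ‖x‖ ≤ t) (hy : ‖y‖ ≤ t) :
    ‖x ^ 2 * A + x * y * B + y ^ 2 * D‖ ≤ (a + b + d) * t ^ 2 := by
  have ht : 0 ≤ t := (norm_nonneg _).trans hx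
  calc _ ≤ _ := norm_add₃_le
    _ = ‖x‖ ^ 2 * ‖A‖ + ‖x‖ * ‖y‖ * ‖B‖ + ‖y‖ ^ 2 * ‖D‖ := by simp
    _ ≤ t ^ 2 * a + t * t * b + t ^ 2 * d := by gcongr
    _ = _ := by ring

theorem three_bound {α β γ u v w r : ℂ} {M s R : ℝ} (hα : ‖α‖ ≤ M) (hβ : ‖β‖ ≤ M) (hγ : ‖γ‖ ≤ M)
    (hu : ‖u‖ ≤ s) (hv : ‖v‖ ≤ s) (hw : ‖w‖ ≤ s) (hr : ‖r‖ ≤ R) :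
    ‖-r - α * u - β * v - γ * w‖ ≤ R + 3 * (M * s) := by
  have hM : 0 ≤ M := (norm_nonneg _).trans hα
  have h1 : ‖α * u‖ ≤ M * s := by rw [norm_mul]; gcongr
  have h2 : ‖β * v‖ ≤ M * s := by rw [norm_mul]; gcongr
  have h3 : ‖γ * w‖ ≤ M * s := by rw [norm_mul]; gcongr
  have := norm_sub_le (-r - α * u - β * v) (γ * w)
  have := norm_sub_le (-r - α * u) (β * v)
  have := norm_sub_le (-r) (α * u)
  rw [norm_neg] at this
  linarith

theorem mk2_sub (x y x' y' : ℂ) : mk2 x y - mk2 x' y' = mk2 (x - x') (y - y') := by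
  ext i; fin_cases i <;> rfl

theorem final_alg {lam mu a d al be ga de ep al' be' ga' de' ep' A0 B0 D0 A1 B1 D1 : ℂ}
    {M : ℝ} (hd : ‖d‖ ≤ M)
    (hal : ‖al‖ ≤ M) (hbe : ‖be‖ ≤ M) (hga : ‖ga‖ ≤ M)
    (hal' : ‖al'‖ ≤ M) (hbe' : ‖be'‖ ≤ M) (hga' : ‖ga'‖ ≤ M)
    (hde' : ‖de'‖ ≤ M) (hep' : ‖ep'‖ ≤ M)
    (hA0 : ‖A0‖ ≤ 2) (hB0 : ‖B0‖ ≤ 12) (hD0 : ‖D0‖ ≤ 2)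
    (hA1 : ‖A1‖ ≤ 2) (hB1 : ‖B1‖ ≤ 12) (hD1 : ‖D1‖ ≤ 2)
    (E1 : lam * al = D0 + al' * mu ^ 2)
    (E2 : lam * be = B0 + 2 * al' * mu * a + be' * lam * mu)
    (E3 : lam * ga = A0 + al' * a ^ 2 + be' * lam * a + ga' * lam ^ 2)
    (E4 : mu * de + a * al = D1 + de' * mu ^ 2)
    (E5 : mu * ep + a * be = B1 + 2 * de' * mu * a + ep' * lam * mu)
    (E6 : a * ga + d = A1 + de' * a ^ 2 + ep' * lam * a)
    (z w : Ck 2) (hz : ‖z‖ ≤ 1) (hw : ‖w‖ ≤ ‖z‖)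
    (hl0 : ‖lam * z 0‖ ≤ ‖z‖) (hl1 : ‖mu * z 1 + a * z 0‖ ≤ ‖z‖)
    (r0 : ‖w 0 - lam * z 0 - (z 0 ^ 2 * A0 + z 0 * z 1 * B0 + z 1 ^ 2 * D0)‖ ≤ 4 * ‖z‖ ^ 3)
    (r1 : ‖w 1 - (mu * z 1 + a * z 0) - (z 0 ^ 2 * A1 + z 0 * z 1 * B1 + z 1 ^ 2 * D1)‖
      ≤ 4 * ‖z‖ ^ 3) :
    ‖lowerG lam mu a d (quadMap al be ga de ep 0 z) - quadMap al' be' ga' de' ep' 0 w‖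
      ≤ (8 + 240 * M + M * ((3 * M) * (3 * M + 2))) * ‖z‖ ^ 3 := by
  set t := ‖z‖ with ht
  set x := z 0 with hx
  set y := z 1 with hy
  have t0 : 0 ≤ t := norm_nonneg _
  have hM : 0 ≤ M := (norm_nonneg _).trans hd
  have xt : ‖x‖ ≤ t := coord_le z 0
  have yt : ‖y‖ ≤ t := coord_le z 1
  have f0 : ‖w 0‖ ≤ t := (coord_le w 0).trans hw
  have f1 : ‖w 1‖ ≤ t := (coord_le w 1).trans hw
  have t3 : t ^ 3 ≤ t ^ 2 := by nlinarith [sq_nonneg t]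
  set l0 := lam * x with hl0d
  set l1 := mu * y + a * x with hl1d
  have s0 : ‖w 0 - l0‖ ≤ 20 * t ^ 2 := by
    have h1 := quad_bound hA0 hB0 hD0 xt yt
    have h2 := norm_add_le (w 0 - l0 - (x ^ 2 * A0 + x * y * B0 + y ^ 2 * D0))
      (x ^ 2 * A0 + x * y * B0 + y ^ 2 * D0)
    rw [sub_add_cancel] at h2
    linarith
  have s1 : ‖w 1 - l1‖ ≤ 20 * t ^ 2 := by
    have h1 := quad_bound hA1 hB1 hD1 xt yt
    have h2 := norm_add_le (w 1 - l1 - (x ^ 2 * A1 + x * y * B1 + y ^ 2 * D1))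
      (x ^ 2 * A1 + x * y * B1 + y ^ 2 * D1)
    rw [sub_add_cancel] at h2
    linarith
  have p11 := prod_diff f1 hl1 s1 s1
  have p01 := prod_diff f0 hl1 s0 s1
  have p00 := prod_diff f0 hl0 s0 s0
  have b0 := three_bound hal' hbe' hga' p11 p01 p00 r0
  have b1 := three_bound (γ := (0 : ℂ)) hde' hep' (by simpa using hM) p11 p01 p00 r1
  have hq : ‖x ^ 2 * ga + x * y * be + y ^ 2 * al‖ ≤ (M + M + M) * t ^ 2 :=
    quad_bound hga hbe hal xt yt
  have hX : ‖d * ((x ^ 2 * ga + x * y * be + y ^ 2 * al) *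
      (x ^ 2 * ga + x * y * be + y ^ 2 * al + 2 * x))‖ ≤ M * ((3 * M) * (3 * M + 2)) * t ^ 3 := by
    have h2 : ‖x ^ 2 * ga + x * y * be + y ^ 2 * al + 2 * x‖ ≤ (3 * M + 2) * t := by
      refine (norm_add_le _ _).trans ?_
      have : ‖2 * x‖ ≤ 2 * t := by rw [norm_mul]; simpa using xt
      have t2 : t ^ 2 ≤ t := by nlinarith
      have : (M + M + M) * t ^ 2 ≤ (M + M + M) * t := by gcongr
      linarith
    rw [norm_mul, norm_mul]
    calc _ ≤ M * (((M + M + M) * t ^ 2) * ((3 * M + 2) * t)) := by gcongr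
      _ = _ := by ring
  unfold lowerG
  rw [quadMap, quadMap, mk2_sub]
  refine (norm_le_coords _).trans ?_
  simp only [mk2_0, mk2_1]
  have c0 : lam * (x + al * y ^ 2 + be * (x * y) + ga * x ^ 2)
      - (w 0 + al' * w 1 ^ 2 + be' * (w 0 * w 1) + ga' * w 0 ^ 2)
      = -(w 0 - l0 - (x ^ 2 * A0 + x * y * B0 + y ^ 2 * D0))
        - al' * (w 1 * w 1 - l1 * l1) - be' * (w 0 * w 1 - l0 * l1)
        - ga' * (w 0 * w 0 - l0 * l0) := by
    rw [hl0d, hl1d]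
    linear_combination y ^ 2 * E1 + x * y * E2 + x ^ 2 * E3
  have c1 : mu * (y + de * y ^ 2 + ep * (x * y) + 0 * x ^ 2)
      + a * (x + al * y ^ 2 + be * (x * y) + ga * x ^ 2)
      + d * (x + al * y ^ 2 + be * (x * y) + ga * x ^ 2) ^ 2
      - (w 1 + de' * w 1 ^ 2 + ep' * (w 0 * w 1) + 0 * w 0 ^ 2)
      = (-(w 1 - l1 - (x ^ 2 * A1 + x * y * B1 + y ^ 2 * D1))
        - de' * (w 1 * w 1 - l1 * l1) - ep' * (w 0 * w 1 - l0 * l1)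
        - 0 * (w 0 * w 0 - l0 * l0)) + d * ((x ^ 2 * ga + x * y * be + y ^ 2 * al) *
      (x ^ 2 * ga + x * y * be + y ^ 2 * al + 2 * x)) := by
    rw [hl0d, hl1d]
    linear_combination y ^ 2 * E4 + x * y * E5 + x ^ 2 * E6
  rw [c0, c1]
  refine (add_le_add b0 ((norm_add_le _ _).trans (add_le_add b1 hX))).trans (le_of_eq ?_)
  ring

/-- **Degree 2 polynomials in ℂ².** For a uniformly attracting sequence of correctly ordered
automorphisms `F_n(x,y) = (λ_n x, μ_n y + a_n x) + h.o.t.` of `ℂ²` there are a bounded sequence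
`d_n`, a constant `C > 0`, and quadratic maps `X_n = id + (quadratic terms)` with uniformly
bounded coefficients, such that with `G_n(x,y) = (λ_n x, μ_n y + a_n x + d_n x²)` one has
`‖G_n(X_{n-1}(z)) - X_n(F_n(z))‖ ≤ C‖z‖³` on the unit ball (indices shifted so that `X n`
plays the role of `X_{n-1}` for the `n`-th map). -/
theorem degree_two_bounded_conjugation (F : ℕ → Ck 2 → Ck 2)
    (hauto : ∀ n, IsAutomorphism (F n)) (hfix : ∀ n, F n 0 = 0)
    (hord : ∀ n, CorrectlyOrdered (F n)) (hua : UniformlyAttracting F) :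
    ∃ (dc : ℕ → ℂ) (Md : ℝ), (∀ n, ‖dc n‖ ≤ Md) ∧
    ∃ C : ℝ, 0 < C ∧
    ∃ (al be ga de ep ze : ℕ → ℂ) (MX : ℝ),
      (∀ n, ‖al n‖ ≤ MX ∧ ‖be n‖ ≤ MX ∧ ‖ga n‖ ≤ MX ∧
            ‖de n‖ ≤ MX ∧ ‖ep n‖ ≤ MX ∧ ‖ze n‖ ≤ MX) ∧
      ∀ n, ∀ z ∈ ball (0 : Ck 2) 1,
        ‖lowerG (derivMatrix (F n) 0 0) (derivMatrix (F n) 1 1) (derivMatrix (F n) 1 0) (dc n)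
            (quadMap (al n) (be n) (ga n) (de n) (ep n) (ze n) z)
          - quadMap (al (n+1)) (be (n+1)) (ga (n+1)) (de (n+1)) (ep (n+1)) (ze (n+1))
            (F n z)‖ ≤ C * ‖z‖ ^ 3 := by
  obtain ⟨a, b, ha, hab, hb, hF, ξ, hξ, hres⟩ := hua
  have hle : ∀ n, ∀ z ∈ ball (0 : Ck 2) 1, ‖F n z‖ ≤ ‖z‖ := fun n z hz =>
    (hF n z hz).2.trans (by nlinarith [norm_nonneg z])
  have hT := fun n => taylor_F (hauto n).1 (hfix n) (fun z hz => (hle n z hz).trans (by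
    rw [mem_ball, dist_zero_right] at hz; exact hz.le))
  choose A B D hA hB hD hTay using hT
  have hL : ∀ n z, ‖fderiv ℂ (F n) 0 z‖ ≤ ‖z‖ := by
    intro n z
    have : ‖fderiv ℂ (F n) 0‖ ≤ 1 := by
      refine Complex.norm_fderiv_le_one_of_mapsTo_ball (R := 1) (hauto n).1.differentiableOn ?_
        one_pos
      intro z hz
      have h := hle n z hz
      rw [mem_ball, dist_zero_right] at hz
      simpa [hfix] using h.trans hz.le
    exact ((fderiv ℂ (F n) 0).le_of_opNorm_le this z).trans (by simp)
  set lam : ℕ → ℂ := fun n => derivMatrix (F n) 0 0 with hlam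
  set mu : ℕ → ℂ := fun n => derivMatrix (F n) 1 1 with hmu
  set aa : ℕ → ℂ := fun n => derivMatrix (F n) 1 0 with haa
  have hLz : ∀ n (z : Ck 2), fderiv ℂ (F n) 0 z =
      z 0 • fderiv ℂ (F n) 0 (EuclideanSpace.single 0 1)
        + z 1 • fderiv ℂ (F n) 0 (EuclideanSpace.single 1 1) := by
    intro n z
    conv_lhs => rw [← mk2_eta z, mk2_lin]
    rw [map_add, map_smul, map_smul]
  have hL0 : ∀ n (z : Ck 2), fderiv ℂ (F n) 0 z 0 = lam n * z 0 := by
    intro n z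
    have h01 : fderiv ℂ (F n) 0 (EuclideanSpace.single 1 1) 0 = 0 := (hord n).1 0 1 (by decide)
    rw [hLz, PiLp.add_apply, PiLp.smul_apply, PiLp.smul_apply, h01]
    simp only [hlam, derivMatrix, smul_eq_mul]
    ring
  have hL1 : ∀ n (z : Ck 2), fderiv ℂ (F n) 0 z 1 = mu n * z 1 + aa n * z 0 := by
    intro n z
    rw [hLz, PiLp.add_apply, PiLp.smul_apply, PiLp.smul_apply]
    simp only [hmu, haa, derivMatrix, smul_eq_mul]
    ring
  have hb1 : ∀ i j n, ‖derivMatrix (F n) i j‖ ≤ 1 := by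
    intro i j n
    refine (coord_le _ _).trans ((hL n _).trans ?_)
    simp
  -- residual bounds
  have hR : ∀ n, ∀ z ∈ ball (0 : Ck 2) 1, ∀ i, ‖F n z i - fderiv ℂ (F n) 0 z i
      - (z 0 ^ 2 * A n i + z 0 * z 1 * B n i + z 1 ^ 2 * D n i)‖ ≤ 4 * ‖z‖ ^ 3 := by
    intro n z hz i
    refine (le_of_eq ?_).trans ((coord_le _ i).trans (hTay n z hz))
    simp [QQ]
  have hA' : ∀ i n, ‖A n i‖ ≤ 2 := fun i n => (coord_le _ i).trans (hA n)
  have hB' : ∀ i n, ‖B n i‖ ≤ 12 := fun i n => (coord_le _ i).trans (hB n)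
  have hD' : ∀ i n, ‖D n i‖ ≤ 2 := fun i n => (coord_le _ i).trans (hD n)
  -- lower bound on mu
  have hmul : ∀ n, a / 2 ≤ ‖mu n‖ := by
    intro n
    have hs : 0 < a / 40 := by positivity
    set z : Ck 2 := mk2 0 ((a / 40 : ℝ) : ℂ) with hz
    have hzn : ‖z‖ = a / 40 := by
      rw [hz, mk2_lin]
      simp only [zero_smul, zero_add, norm_smul, Complex.norm_real, Real.norm_of_nonneg hs.le]
      simp
    have hzm : z ∈ ball (0 : Ck 2) 1 := by
      rw [mem_ball, dist_zero_right, hzn]; linarith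
    have h1 := (hF n z hzm).1
    have h2 := hTay n z hzm
    have h3 : QQ (A n) (B n) (D n) z = ((a / 40 : ℝ) : ℂ) ^ 2 • D n := by
      simp [QQ, hz, mk2_0, mk2_1]
    have h4 : ‖QQ (A n) (B n) (D n) z‖ ≤ (a / 40) ^ 2 * 2 := by
      rw [h3, norm_smul, norm_pow, Complex.norm_real, Real.norm_of_nonneg hs.le]
      gcongr
      exact hD n
    have h5 : ‖fderiv ℂ (F n) 0 z‖ ≤ ‖mu n‖ * (a / 40) := by
      refine (norm_le_coords _).trans ?_
      rw [hL0, hL1]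
      simp only [hz, mk2_0, mk2_1, mul_zero, add_zero, norm_zero, zero_add]
      rw [norm_mul, Complex.norm_real, Real.norm_of_nonneg hs.le]
    have h6 : ‖F n z‖ ≤ ‖F n z - fderiv ℂ (F n) 0 z - QQ (A n) (B n) (D n) z‖
        + ‖QQ (A n) (B n) (D n) z‖ + ‖fderiv ℂ (F n) 0 z‖ := by
      have e : F n z = (F n z - fderiv ℂ (F n) 0 z - QQ (A n) (B n) (D n) z)
        + QQ (A n) (B n) (D n) z + fderiv ℂ (F n) 0 z := by abel
      conv_lhs => rw [e]
      exact norm_add₃_le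
    rw [hzn] at h1 h2
    have h7 : a * (a / 40) ≤ 4 * (a / 40) ^ 3 + (a / 40) ^ 2 * 2 + ‖mu n‖ * (a / 40) := by linarith
    have h8 : a ≤ 4 * (a / 40) ^ 2 + (a / 40) * 2 + ‖mu n‖ := by
      refine le_of_mul_le_mul_right ?_ hs
      calc _ ≤ _ := h7
        _ = _ := by ring
    nlinarith
  have hlamξ : ∀ n, ‖mu n‖ * ‖mu n‖ ≤ ξ * ‖lam n‖ := fun n => hres n 0 1 1 (by decide)
  have hlaml : ∀ n, (a / 2) ^ 2 ≤ ‖lam n‖ := by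
    intro n
    have := hlamξ n
    have := hmul n
    nlinarith [norm_nonneg (lam n)]
  have hlam0 : ∀ n, lam n ≠ 0 := fun n => norm_pos_iff.1 ((by positivity : 0 < (a/2)^2).trans_le (hlaml n))
  have hmu0 : ∀ n, mu n ≠ 0 := fun n => norm_pos_iff.1 ((by positivity : 0 < a/2).trans_le (hmul n))
  have hlam1 : ∀ n, ‖lam n‖ ≤ ξ := fun n =>
    le_of_mul_le_mul_right (hres n 0 0 0 le_rfl) (norm_pos_iff.2 (hlam0 n))
  have hmu1 : ∀ n, ‖mu n‖ ≤ ξ := fun n =>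
    le_of_mul_le_mul_right (hres n 0 0 1 le_rfl) (norm_pos_iff.2 (hlam0 n))
  have hmm : ∀ n, ‖mu n ^ 2 * (lam n)⁻¹‖ ≤ ξ := by
    intro n
    rw [norm_mul, norm_inv, norm_pow, ← div_eq_mul_inv, div_le_iff₀ (norm_pos_iff.2 (hlam0 n)), sq]
    exact hlamξ n
  have Bl : Bd lam := ⟨1, hb1 0 0⟩
  have Bm : Bd mu := ⟨1, hb1 1 1⟩
  have Ba : Bd aa := ⟨1, hb1 1 0⟩
  have Bli : Bd (fun n => (lam n)⁻¹) := ⟨((a / 2) ^ 2)⁻¹, fun n => by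
    rw [norm_inv]; exact inv_anti₀ (by positivity) (hlaml n)⟩
  have Bmi : Bd (fun n => (mu n)⁻¹) := ⟨(a / 2)⁻¹, fun n => by
    rw [norm_inv]; exact inv_anti₀ (by positivity) (hmul n)⟩
  have BA : ∀ i, Bd (fun n => A n i) := fun i => ⟨2, hA' i⟩
  have BB : ∀ i, Bd (fun n => B n i) := fun i => ⟨12, hB' i⟩
  have BD : ∀ i, Bd (fun n => D n i) := fun i => ⟨2, hD' i⟩
  obtain ⟨al, Bal, hal⟩ := bd_rec hξ hmm ((BD 0).mul Bli)
  obtain ⟨be, Bbe, hbe⟩ := bd_rec hξ hmu1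
    (((BB 0).add ((Bal.shift.two.mul Bm).mul Ba)).mul Bli)
  obtain ⟨ga, Bga, hga⟩ := bd_rec hξ hlam1
    ((((BA 0).add ((Bal.shift.mul Ba).mul Ba)).add ((Bbe.shift.mul Bl).mul Ba)).mul Bli)
  obtain ⟨de, Bde, hde⟩ := bd_rec hξ hmu1 (((BD 1).sub (Ba.mul Bal)).mul Bmi)
  obtain ⟨ep, Bep, hep⟩ := bd_rec hξ hlam1
    ((((BB 1).add ((Bde.shift.two.mul Bm).mul Ba)).sub (Ba.mul Bbe)).mul Bmi)
  obtain ⟨dc, hdc⟩ : ∃ dc : ℕ → ℂ, dc = fun n => ((A n 1 + (de (n + 1) * aa n) * aa n)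
      + (ep (n + 1) * lam n) * aa n) - aa n * ga n := ⟨_, rfl⟩
  have Bdc : Bd dc := by
    rw [hdc]
    exact (((BA 1).add ((Bde.shift.mul Ba).mul Ba)).add ((Bep.shift.mul Bl).mul Ba)).sub
      (Ba.mul Bga)
  obtain ⟨M1, hM1⟩ := Bal
  obtain ⟨M2, hM2⟩ := Bbe
  obtain ⟨M3, hM3⟩ := Bga
  obtain ⟨M4, hM4⟩ := Bde
  obtain ⟨M5, hM5⟩ := Bep
  obtain ⟨M6, hM6⟩ := Bdc
  obtain ⟨M, hM⟩ : ∃ M : ℝ, M = |M1| + |M2| + |M3| + |M4| + |M5| + |M6| := ⟨_, rfl⟩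
  have g1 := abs_nonneg M1
  have g2 := abs_nonneg M2
  have g3 := abs_nonneg M3
  have g4 := abs_nonneg M4
  have g5 := abs_nonneg M5
  have g6 := abs_nonneg M6
  have hM0 : 0 ≤ M := by rw [hM]; positivity
  have k1 : ∀ n, ‖al n‖ ≤ M := fun n => (hM1 n).trans (by linarith [le_abs_self M1])
  have k2 : ∀ n, ‖be n‖ ≤ M := fun n => (hM2 n).trans (by linarith [le_abs_self M2])
  have k3 : ∀ n, ‖ga n‖ ≤ M := fun n => (hM3 n).trans (by linarith [le_abs_self M3])
  have k4 : ∀ n, ‖de n‖ ≤ M := fun n => (hM4 n).trans (by linarith [le_abs_self M4])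
  have k5 : ∀ n, ‖ep n‖ ≤ M := fun n => (hM5 n).trans (by linarith [le_abs_self M5])
  have k6 : ∀ n, ‖dc n‖ ≤ M := fun n => (hM6 n).trans (by linarith [le_abs_self M6])
  refine ⟨dc, M, k6, 8 + 240 * M + M * ((3 * M) * (3 * M + 2)), by positivity, al, be, ga, de, ep,
    fun _ => 0, M, fun n => ⟨k1 n, k2 n, k3 n, k4 n, k5 n, by simpa using hM0⟩, ?_⟩
  intro n z hz
  have hz1 : ‖z‖ ≤ 1 := by rw [mem_ball, dist_zero_right] at hz; exact hz.le
  have h00 := hlam0 n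
  have h11 := hmu0 n
  refine final_alg (k6 n) (k1 n) (k2 n) (k3 n) (k1 _) (k2 _) (k3 _) (k4 _) (k5 _)
    (hA' 0 n) (hB' 0 n) (hD' 0 n) (hA' 1 n) (hB' 1 n) (hD' 1 n) ?_ ?_ ?_ ?_ ?_ ?_ z (F n z) hz1
    (hle n z hz) ?_ ?_ ?_ ?_
  · rw [hal n]; change lam n * _ = _ + _ * mu n ^ 2; field_simp
  · rw [hbe n]; change lam n * _ = _ + _ * mu n * aa n + _ * lam n * mu n; field_simp
  · rw [hga n]
    change lam n * _ = _ + _ * aa n ^ 2 + _ * lam n * aa n + _ * lam n ^ 2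
    field_simp
  · rw [hde n]; change mu n * _ + aa n * _ = _ + _ * mu n ^ 2; field_simp; ring
  · rw [hep n]
    change mu n * _ + aa n * _ = _ + _ * mu n * aa n + _ * lam n * mu n
    field_simp; ring
  · rw [hdc]
    change aa n * _ + _ = _ + _ * aa n ^ 2 + _ * lam n * aa n
    ring
  · rw [← hL0]; exact (coord_le _ _).trans (hL n z)
  · rw [← hL1]; exact (coord_le _ _).trans (hL n z)
  · rw [← hL0]; exact hR n z hz 0
  · rw [← hL1]; exact hR n z hz 1
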